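/- arXiv:2410.01549 — 2 statements merged into one kernel-verified Lean document; each statement's English description precedes it below -/
import Mathlib

section
/- Let k ≥ 2 be even and let m ≥ 6 be even. Set c = m−2 and d = m−4 if m ≡ 0 (mod 4), and c = m−1 and d = m−2 if m ≡ 2 (mod 4). Suppose there exists an edge 2-coloring of the complete graph on n vertices with no monochromatic copy of the wheel W_m. Then there exists a Gallai k-coloring of the complete graph on n + 5c(5^((k−2)/2) − 1) − d(k−2) vertices with no monochromatic copy of W_m. Consequently GR_k(W_m) ≥ R_2(W_m) + 5c(5^((k−2)/2) − 1) − d(k−2). -/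
open SimpleGraph

/-- A monochromatic copy of `H` in the graph `G` edge-colored by `c`:
an injective map sending edges of `H` to edges of `G`, all image edges of one color. -/
def IsMonoCopy {α V : Type*} {k : ℕ} (G : SimpleGraph V) (c : V → V → Fin k)
    (H : SimpleGraph α) : Prop :=
  ∃ (f : α → V) (i : Fin k), Function.Injective f ∧
    ∀ a b, H.Adj a b → G.Adj (f a) (f b) ∧ c (f a) (f b) = i

/-- The edge coloring `c` of `G` has no rainbow triangle. -/
def NoRainbowTriangle {V : Type*} {k : ℕ} (G : SimpleGraph V) (c : V → V → Fin k) : Prop :=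
  ¬ ∃ x y z : V, G.Adj x y ∧ G.Adj y z ∧ G.Adj x z ∧
    c x y ≠ c y z ∧ c y z ≠ c x z ∧ c x y ≠ c x z

/-- The Gallai–Ramsey number `GR_k(H)`: the least `N` such that every
rainbow-triangle-free `k`-edge-coloring of the complete graph on `N` vertices
contains a monochromatic copy of `H`. -/
noncomputable def GallaiRamsey (k : ℕ) {α : Type*} (H : SimpleGraph α) : ℕ :=
  sInf {N | ∀ c : Fin N → Fin N → Fin k, (∀ x y, c x y = c y x) →
    NoRainbowTriangle (⊤ : SimpleGraph (Fin N)) c →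
    IsMonoCopy (⊤ : SimpleGraph (Fin N)) c H}

/-- The diagonal two-color Ramsey number `R(H, H)`. -/
noncomputable def Ramsey2 {α : Type*} (H : SimpleGraph α) : ℕ :=
  sInf {N | ∀ c : Fin N → Fin N → Fin 2, (∀ x y, c x y = c y x) →
    IsMonoCopy (⊤ : SimpleGraph (Fin N)) c H}

/-- The fan `F_3 = K_1 + 3K_2`: vertex `0` is the center, joined to all other
vertices, together with the three disjoint edges `12`, `34`, `56`. -/
def fanF3 : SimpleGraph (Fin 7) :=
  SimpleGraph.fromRel (fun a b => a = 0 ∨ (a.val % 2 = 1 ∧ b.val = a.val + 1))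

/-- The kipas `K̂_m = K_1 + P_m`: vertex `0` is the center, joined to all other
vertices, and `1, 2, …, m` form a path. -/
def kipasG (m : ℕ) : SimpleGraph (Fin (m + 1)) :=
  SimpleGraph.fromRel (fun a b => a = 0 ∨ (1 ≤ a.val ∧ b.val = a.val + 1))

/-- The wheel `W_m = K_1 + C_m`: vertex `0` is the center, joined to all other
vertices, and `1, 2, …, m` form a cycle. -/
def wheelG (m : ℕ) : SimpleGraph (Fin (m + 1)) :=
  SimpleGraph.fromRel (fun a b =>
    a = 0 ∨ (1 ≤ a.val ∧ b.val = a.val + 1) ∨ (a.val = m ∧ b.val = 1))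

/-- The star `K_{1,n}`: vertex `0` is the center, joined to all other vertices. -/
def starG (n : ℕ) : SimpleGraph (Fin (n + 1)) :=
  SimpleGraph.fromRel (fun a _ => a = 0)

/-- `K⁺_{1,n}`, the star `K_{1,n}` with one edge subdivided: vertex `0` is joined to
`1, …, n`, and the extra vertex `n+1` is joined to `n`. -/
def starPlusG (n : ℕ) : SimpleGraph (Fin (n + 2)) :=
  SimpleGraph.fromRel (fun a b => (a = 0 ∧ b.val ≤ n) ∨ (a.val = n ∧ b.val = n + 1))

/-- The complete graph on `Fin N` with the single edge `{0, 1}` deleted. -/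
def compMinusEdge (N : ℕ) : SimpleGraph (Fin N) where
  Adj x y := x ≠ y ∧ ¬(x.val = 0 ∧ y.val = 1) ∧ ¬(x.val = 1 ∧ y.val = 0)
  symm := by
    refine ⟨?_⟩
    intro x y h
    exact ⟨h.1.symm, fun hc => h.2.2 ⟨hc.2, hc.1⟩, fun hc => h.2.1 ⟨hc.2, hc.1⟩⟩
  loopless := by refine ⟨?_⟩; intro x h; exact h.1 rfl

/-- The complete graph on `Fin M` together with one extra vertex (`none`)
joined exactly to the vertices of `A`. -/
def addVertex (M : ℕ) (A : Set (Fin M)) : SimpleGraph (Option (Fin M)) where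
  Adj x y := (∃ a b : Fin M, x = some a ∧ y = some b ∧ a ≠ b) ∨
    (∃ a ∈ A, (x = some a ∧ y = none) ∨ (x = none ∧ y = some a))
  symm := by
    refine ⟨?_⟩
    rintro x y (⟨a, b, hx, hy, hab⟩ | ⟨a, ha, (⟨hx, hy⟩ | ⟨hx, hy⟩)⟩)
    · exact Or.inl ⟨b, a, hy, hx, hab.symm⟩
    · exact Or.inr ⟨a, ha, Or.inr ⟨hy, hx⟩⟩
    · exact Or.inr ⟨a, ha, Or.inl ⟨hy, hx⟩⟩
  loopless := by
    refine ⟨?_⟩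
    rintro x (⟨a, b, hx, hy, hab⟩ | ⟨a, ha, (⟨hx, hy⟩ | ⟨hx, hy⟩)⟩) <;> simp_all

/-- The star-critical Gallai–Ramsey number `GR*_k(H)`: the least `s` such that
every rainbow-triangle-free `k`-edge-coloring of the complete graph on
`GR_k(H) - 1` vertices plus one extra vertex joined to exactly `s` of them
contains a monochromatic copy of `H`. -/
noncomputable def GRstar (k : ℕ) {α : Type*} (H : SimpleGraph α) : ℕ :=
  sInf {s | ∀ A : Finset (Fin (GallaiRamsey k H - 1)), A.card = s →
    ∀ c : Option (Fin (GallaiRamsey k H - 1)) → Option (Fin (GallaiRamsey k H - 1)) → Fin k,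
      (∀ x y, c x y = c y x) →
      NoRainbowTriangle (addVertex (GallaiRamsey k H - 1) (↑A)) c →
      IsMonoCopy (addVertex (GallaiRamsey k H - 1) (↑A)) c H}

/-- `H` is Gallai-Ramsey-full for `k` colors: the complete graph on `GR_k(H)`
vertices minus one edge admits a rainbow-triangle-free `k`-edge-coloring with
no monochromatic copy of `H`. -/
def GallaiRamseyFull (k : ℕ) {α : Type*} (H : SimpleGraph α) : Prop :=
  ∃ c : Fin (GallaiRamsey k H) → Fin (GallaiRamsey k H) → Fin k,
    (∀ x y, c x y = c y x) ∧
    NoRainbowTriangle (compMinusEdge (GallaiRamsey k H)) c ∧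
    ¬ IsMonoCopy (compMinusEdge (GallaiRamsey k H)) c H

/-- Reachability inside the vertex set `s`: there is a walk all of whose
vertices lie in `s`. -/
def ReachableWithin {V : Type*} (R : SimpleGraph V) (s : Set V) (u v : V) : Prop :=
  ∃ w : R.Walk u v, ∀ x ∈ w.support, x ∈ s

/-!
The coloring is built by substituting smaller colorings into the 2-coloring of `K₅` whose color
classes are both pentagons, hence triangle-free. Two new colors are spent on the pentagons, and
the coloring from the previous stage is one of the five parts. A pentagon color may reappear
inside a part provided that no two parts using it are joined in it and that within each part it is
`C_m`-free with all degrees smaller than the vertex cover number `⌈m / 2⌉` of `C_m`. Indeed, in a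
monochromatic wheel of that color, any two adjacent rim vertices outside the part of the center lie
in one common part, as the pentagon is triangle-free. If the color is absent from the center's part,
the whole rim lies in one part, contradicting `C_m`-freeness; otherwise the color is absent from
every part joined to it, so the rim vertices in the center's part form a vertex cover of the rim
contained in the neighborhood of the center, which is too small.

The parts are assembled from the given 2-coloring, from monochromatic blocks on `⌈m / 2⌉` vertices,
and from blocks on `c` vertices split into two nearly regular circulant color classes.
-/

section Substitution

variable {ι : Type*} {V : ι → Type*} {α : Type*} {A : SimpleGraph α}

/-- The generalized lexicographic product: every vertex `p` of `R` is replaced by the graph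
`G p`, and vertices in distinct parts are adjacent exactly when the parts are adjacent in `R`. -/
def substitution (R : SimpleGraph ι) (G : ∀ p, SimpleGraph (V p)) : SimpleGraph (Σ p, V p) :=
  R.comap Sigma.fst ⊔ ⨆ p, (G p).map (Function.Embedding.sigmaMk p)

variable {R : SimpleGraph ι} {G : ∀ p, SimpleGraph (V p)}

theorem substitution_adj_mk_mk {p : ι} {x y : V p} :
    (substitution R G).Adj ⟨p, x⟩ ⟨p, y⟩ ↔ (G p).Adj x y := by
  simp only [substitution, sup_adj, comap_adj, SimpleGraph.irrefl, false_or, iSup_adj, map_adj]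
  constructor
  · rintro ⟨q, x', y', h, hx, hy⟩
    cases hx
    cases hy
    exact h
  · exact fun h => ⟨p, x, y, h, rfl, rfl⟩

theorem substitution_adj_of_fst_ne {u v : Σ p, V p} (huv : u.1 ≠ v.1) :
    (substitution R G).Adj u v ↔ R.Adj u.1 v.1 := by
  simp only [substitution, sup_adj, comap_adj, iSup_adj, map_adj, or_iff_left_iff_imp]
  rintro ⟨q, x, y, -, rfl, rfl⟩
  exact absurd rfl huv

theorem fst_ne_of_substitution_adj {u v : Σ p, V p} (h : (substitution R G).Adj u v)
    (hu : G u.1 = ⊥) : u.1 ≠ v.1 := by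
  obtain ⟨p, x⟩ := u
  obtain ⟨q, y⟩ := v
  rintro rfl
  exact (hu ▸ substitution_adj_mk_mk.1 h : (⊥ : SimpleGraph (V p)).Adj x y)

theorem substitution_bot_bot :
    substitution (⊥ : SimpleGraph ι) (fun p => (⊥ : SimpleGraph (V p))) = ⊥ := by
  ext u v
  simp [substitution, map_adj]

theorem fst_eq_of_substitution_bot_adj {u v : Σ p, V p}
    (h : (substitution (⊥ : SimpleGraph ι) G).Adj u v) : u.1 = v.1 :=
  of_not_not fun huv => (substitution_adj_of_fst_ne huv).1 h

theorem apply_eq_of_preconnected {β : Type*} (hA : A.Preconnected) {f : α → β}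
    (hf : ∀ a b, A.Adj a b → f a = f b) (a b : α) : f a = f b := by
  obtain ⟨w⟩ := hA a b
  induction w with
  | nil => rfl
  | cons h _ ih => exact (hf _ _ h).trans ih

theorem exists_copy_of_fst_eq (f : Copy A (substitution R G)) {p : ι} (hf : ∀ a, (f a).1 = p) :
    ∃ g : Copy A (G p), ∀ a, f a = ⟨p, g a⟩ := by
  have hg (a : α) : ∃ x : V p, f a = ⟨p, x⟩ := ⟨hf a ▸ (f a).2, by grind⟩
  choose g hg using hg
  refine ⟨⟨⟨g, fun {a b} hab => ?_⟩, fun a b hab => f.injective ?_⟩, hg⟩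
  · rw [← substitution_adj_mk_mk (R := R) (G := G), ← hg, ← hg]
    exact f.toHom.map_adj hab
  · change g a = g b at hab
    simp only [Copy.toHom_apply, hg, hab]

/-- `ConeFree A G` says that `G` contains no copy of the cone `K₁ + A`. -/
def ConeFree (A : SimpleGraph α) {W : Type*} (G : SimpleGraph W) : Prop :=
  ∀ (v : W) (f : Copy A G), ¬ ∀ a, G.Adj v (f a)

/-- `G` is sparse with respect to `A` if it is `A`-free and all its degrees are smaller than the
vertex cover number of `A`. Two nonadjacent parts of a substitution may be sparse in a color of
the outer graph without creating a cone over `A`. -/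
structure IsSparse (A : SimpleGraph α) {W : Type*} (G : SimpleGraph W) : Prop where
  free : A.Free G
  encard_neighborSet_lt (v : W) : (G.neighborSet v).encard < A.vertexCoverNum

section Basic

variable {W W' : Type*} {G : SimpleGraph W} {G' : SimpleGraph W'}

theorem ConeFree.of_isContained (h : ConeFree A G) (hG : G' ⊑ G) : ConeFree A G' := by
  obtain ⟨e⟩ := hG
  exact fun v f hv => h (e v) (e.comp f) fun a => e.toHom.map_adj (hv a)

theorem IsSparse.of_isContained (h : IsSparse A G) (hG : G' ⊑ G) : IsSparse A G' := by
  refine ⟨fun hA => h.free (hA.trans hG), fun v => ?_⟩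
  obtain ⟨e⟩ := hG
  exact (e.mapNeighborSet v).encard_le.trans_lt (h.encard_neighborSet_lt (e v))

theorem IsSparse.coneFree (h : IsSparse A G) : ConeFree A G :=
  fun _ f _ => h.free ⟨f⟩

theorem isSparse_bot (hA : A ≠ ⊥) : IsSparse A (⊥ : SimpleGraph W) :=
  ⟨free_bot hA, fun v => by simpa [neighborSet_bot, pos_iff_ne_zero] using hA⟩

theorem free_of_card_lt (h : ENat.card W < ENat.card α) : A.Free G :=
  fun ⟨f⟩ => h.not_ge (ENat.card_le_card_of_injective f.injective)

theorem isSparse_of_card_le [Finite W] [Nonempty α] [Finite α]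
    (h : ENat.card W ≤ A.vertexCoverNum) : IsSparse A G := by
  refine ⟨free_of_card_lt (h.trans_lt A.vertexCoverNum_lt_card), fun v => lt_of_lt_of_le ?_ h⟩
  have hne : G.neighborSet v ≠ Set.univ := fun hv => G.irrefl ((Set.ext_iff.1 hv v).2 trivial)
  rw [← Set.encard_univ]
  exact (Set.toFinite _).encard_lt_encard ((Set.subset_univ _).ssubset_of_ne hne)

end Basic

theorem ConeFree.substitution_bot (h : ∀ p, ConeFree A (G p)) :
    ConeFree A (substitution (⊥ : SimpleGraph ι) G) := by
  rintro ⟨p, x⟩ f hv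
  obtain ⟨g, hg⟩ := exists_copy_of_fst_eq f fun a => (fst_eq_of_substitution_bot_adj (hv a)).symm
  exact h p x g fun a => substitution_adj_mk_mk.1 (hg a ▸ hv a)

theorem IsSparse.substitution_bot (hA : A.Connected) (h : ∀ p, IsSparse A (G p)) :
    IsSparse A (substitution (⊥ : SimpleGraph ι) G) := by
  constructor
  · rintro ⟨f⟩
    obtain ⟨a₀⟩ := hA.nonempty
    have hconst := apply_eq_of_preconnected hA.preconnected (f := fun a => (f a).1)
      fun a b hab => fst_eq_of_substitution_bot_adj (f.toHom.map_adj hab)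
    obtain ⟨g, -⟩ := exists_copy_of_fst_eq f fun a => hconst a a₀
    exact (h _).free ⟨g⟩
  · rintro ⟨p, x⟩
    have hsub : (substitution (⊥ : SimpleGraph ι) G).neighborSet ⟨p, x⟩ ⊆
        Sigma.mk p '' (G p).neighborSet x := by
      rintro ⟨q, y⟩ hy
      obtain rfl : p = q := fst_eq_of_substitution_bot_adj hy
      exact ⟨y, substitution_adj_mk_mk.1 hy, rfl⟩
    calc ((substitution (⊥ : SimpleGraph ι) G).neighborSet ⟨p, x⟩).encard
        ≤ (Sigma.mk p '' (G p).neighborSet x).encard := Set.encard_le_encard hsub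
      _ ≤ ((G p).neighborSet x).encard := Set.encard_image_le _ _
      _ < A.vertexCoverNum := (h p).encard_neighborSet_lt x

theorem fst_eq_of_adj_of_cliqueFree_three (hR : R.CliqueFree 3) {u v w : Σ p, V p}
    (huv : (substitution R G).Adj u v) (huw : (substitution R G).Adj u w)
    (hvw : (substitution R G).Adj v w) (hv : u.1 ≠ v.1) (hw : u.1 ≠ w.1) : v.1 = w.1 := by
  classical
  by_contra hne
  rw [substitution_adj_of_fst_ne ‹_›] at huv huw hvw
  exact hR _ (is3Clique_triple_iff.2 ⟨huv, huw, hvw⟩)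

theorem ConeFree.substitution (hA : A.Connected) (hR : R.CliqueFree 3)
    (hbot : ∀ p q, R.Adj p q → G p = ⊥ ∨ G q = ⊥) (hG : ∀ p, IsSparse A (G p)) :
    ConeFree A (substitution R G) := by
  rintro ⟨p, x⟩ f hv
  have hpart {a b : α} (hab : A.Adj a b) (ha : p ≠ (f a).1) (hb : p ≠ (f b).1) :
      (f a).1 = (f b).1 :=
    fst_eq_of_adj_of_cliqueFree_three hR (hv a) (hv b) (f.toHom.map_adj hab) ha hb
  by_cases hp : G p = ⊥
  · have hne (a : α) : p ≠ (f a).1 := fst_ne_of_substitution_adj (hv a) hp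
    obtain ⟨a₀⟩ := hA.nonempty
    have hconst := apply_eq_of_preconnected hA.preconnected (f := fun a => (f a).1)
      fun a b hab => hpart hab (hne a) (hne b)
    obtain ⟨g, -⟩ := exists_copy_of_fst_eq f fun a => hconst a a₀
    exact (hG _).free ⟨g⟩
  · let c : Set α := {a | p = (f a).1}
    have hcover : A.IsVertexCover c := by
      intro a b hab
      by_contra! h
      obtain ⟨ha, hb⟩ : p ≠ (f a).1 ∧ p ≠ (f b).1 := h
      have hq : G (f a).1 = ⊥ :=
        (hbot _ _ ((substitution_adj_of_fst_ne (u := ⟨p, x⟩) ha).1 (hv a))).resolve_left hp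
      exact fst_ne_of_substitution_adj (f.toHom.map_adj hab) hq (hpart hab ha hb)
    have hmaps : Set.MapsTo f c (Sigma.mk p '' (G p).neighborSet x) := by
      intro a ha
      obtain ⟨y, hy⟩ : ∃ y : V p, ⟨p, y⟩ = f a := ⟨ha ▸ (f a).2, by grind⟩
      exact ⟨y, substitution_adj_mk_mk.1 (hy ▸ hv a), hy⟩
    refine ((hG p).encard_neighborSet_lt x).not_ge ?_
    calc A.vertexCoverNum ≤ c.encard := hcover.vertexCoverNum_le
      _ ≤ (Sigma.mk p '' (G p).neighborSet x).encard :=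
        Set.encard_le_encard_of_injOn hmaps f.injective.injOn
      _ ≤ ((G p).neighborSet x).encard := Set.encard_image_le _ _

end Substitution

section Ramsey

universe u

open scoped Classical in
theorem exists_lt_card_filter_adj {κ V : Type*} [Fintype κ] {G : κ → SimpleGraph V}
    {B : Finset V} (hB : (B : Set V).Pairwise fun x y => ∃ i, (G i).Adj x y) {x : V} (hx : x ∈ B)
    {N : κ → ℕ} (hcard : 2 + ∑ i, N i ≤ B.card) :
    ∃ i, N i < (B.filter ((G i).Adj x)).card := by
  have hcover : B.erase x ⊆ Finset.univ.biUnion fun i => B.filter ((G i).Adj x) := by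
    intro y hy
    obtain ⟨hyx, hy⟩ := Finset.mem_erase.1 hy
    obtain ⟨i, hi⟩ := hB hx hy hyx.symm
    exact Finset.mem_biUnion.2 ⟨i, Finset.mem_univ i, Finset.mem_filter.2 ⟨hy, hi⟩⟩
  have hsum : ∑ i, N i < ∑ i, (B.filter ((G i).Adj x)).card := by
    have := (Finset.card_le_card hcover).trans Finset.card_biUnion_le
    rw [Finset.card_erase_of_mem hx] at this
    omega
  obtain ⟨i, -, hi⟩ := Finset.exists_lt_of_sum_lt hsum
  exact ⟨i, hi⟩

theorem exists_isNClique_of_le_card {κ : Type*} [Finite κ] (s : κ → ℕ) :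
    ∃ N, ∀ {V : Type u} (G : κ → SimpleGraph V) (B : Finset V),
      (B : Set V).Pairwise (fun x y => ∃ i, (G i).Adj x y) → N ≤ B.card →
        ∃ i, ∃ t ⊆ B, (G i).IsNClique (s i) t := by
  classical
  cases nonempty_fintype κ
  induction s using WellFoundedLT.induction with
  | ind s ih =>
    by_cases! hs : ∃ i, s i = 0
    · obtain ⟨i, hi⟩ := hs
      exact ⟨0, fun G B _ _ => ⟨i, ∅, Finset.empty_subset B, by simp [hi]⟩⟩
    have hlt (i : κ) : Function.update s i (s i - 1) < s :=
      update_lt_self_iff.2 (Nat.sub_one_lt (hs i))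
    choose N hN using fun i => ih _ (hlt i)
    refine ⟨2 + ∑ i, N i, fun {V} G B hB hcard => ?_⟩
    obtain ⟨x, hx⟩ : B.Nonempty := Finset.card_pos.1 (by omega)
    obtain ⟨i, hi⟩ := exists_lt_card_filter_adj hB hx hcard
    have hsub := Finset.filter_subset ((G i).Adj x) B
    obtain ⟨l, t, htB, ht⟩ := hN i G _ (hB.mono (Finset.coe_subset.2 hsub)) hi.le
    by_cases hl : l = i
    · subst hl
      refine ⟨l, insert x t, Finset.insert_subset hx (htB.trans hsub), ?_⟩
      have := ht.insert fun y hy => (Finset.mem_filter.1 (htB hy)).2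
      rwa [Function.update_self, Nat.sub_add_cancel (Nat.pos_of_ne_zero (hs l))] at this
    · exact ⟨l, t, htB.trans hsub, by rwa [Function.update_of_ne hl] at ht⟩

theorem exists_isContained_of_le_card {κ α : Type*} [Finite κ] [Finite α] (H : SimpleGraph α) :
    ∃ N, ∀ {V : Type u} [Fintype V] (G : κ → SimpleGraph V),
      (∀ x y, x ≠ y → ∃ i, (G i).Adj x y) → N ≤ Fintype.card V → ∃ i, H ⊑ G i := by
  cases nonempty_fintype α
  obtain ⟨N, hN⟩ := exists_isNClique_of_le_card.{u} fun _ : κ => Fintype.card α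
  refine ⟨N, fun {V} _ G hG hcard => ?_⟩
  obtain ⟨i, t, -, ht⟩ := hN G Finset.univ (fun x _ y _ => hG x y) hcard
  refine ⟨i, IsContained.mono_left le_top ?_⟩
  by_contra hfree
  exact ht.not_cliqueFree (cliqueFree_iff_top_free.2 hfree)

end Ramsey

section Wheel

theorem lt_vertexCoverNum_cycleGraph {d m : ℕ} (hm : 2 ≤ m) (hd : 2 * d < m) :
    (d : ℕ∞) < (cycleGraph m).vertexCoverNum := by
  classical
  obtain ⟨n, rfl⟩ : ∃ n, m = n + 2 := ⟨m - 2, by omega⟩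
  obtain ⟨c, hc, hcover⟩ := (cycleGraph (n + 2)).vertexCoverNum_exists
  have hunion : (Finset.univ : Finset (Fin (n + 2))) ⊆
      c.toFinset ∪ c.toFinset.image (· - 1) := by
    intro i _
    have := hcover (v := i) (w := i + 1) (by simp [cycleGraph_adj])
    rw [Finset.mem_union, Finset.mem_image, Set.mem_toFinset]
    exact this.imp_right fun h => ⟨i + 1, Set.mem_toFinset.2 h, add_sub_cancel_right i 1⟩
  have hcard : n + 2 ≤ 2 * c.toFinset.card := by
    calc n + 2 = (Finset.univ : Finset (Fin (n + 2))).card := by simp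
      _ ≤ (c.toFinset ∪ c.toFinset.image (· - 1)).card := Finset.card_le_card hunion
      _ ≤ c.toFinset.card + c.toFinset.card :=
        (Finset.card_union_le _ _).trans (Nat.add_le_add_left Finset.card_image_le _)
      _ = 2 * c.toFinset.card := (two_mul _).symm
  rw [← hc, ← Set.coe_toFinset c, Set.encard_coe_eq_coe_finsetCard, Nat.cast_lt]
  omega

theorem wheelG_adj_zero_succ {m : ℕ} (a : Fin m) : (wheelG m).Adj 0 a.succ := by
  simp [wheelG, fromRel_adj, (Fin.succ_ne_zero a).symm]

theorem wheelG_adj_succ_succ {m : ℕ} (hm : 2 ≤ m) {a b : Fin m} :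
    (wheelG m).Adj a.succ b.succ ↔ (cycleGraph m).Adj a b := by
  have ha := a.isLt
  have hb := b.isLt
  rw [cycleGraph_adj']
  simp only [wheelG, fromRel_adj, ne_eq, Fin.succ_inj, Fin.succ_ne_zero, Fin.val_succ, false_or]
  rcases lt_trichotomy a b with h | rfl | h
  · rw [Fin.coe_sub_iff_lt.2 h, Fin.coe_sub_iff_le.2 h.le, Fin.ext_iff]
    rw [Fin.lt_def] at h
    omega
  · rw [Fin.coe_sub_iff_le.2 le_rfl]
    simp
  · rw [Fin.coe_sub_iff_lt.2 h, Fin.coe_sub_iff_le.2 h.le, Fin.ext_iff]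
    rw [Fin.lt_def] at h
    omega

theorem wheelG_isContained_iff {m : ℕ} (hm : 2 ≤ m) {V : Type*} {G : SimpleGraph V} :
    wheelG m ⊑ G ↔ ¬ ConeFree (cycleGraph m) G := by
  rw [ConeFree]
  push Not
  constructor
  · rintro ⟨f⟩
    exact ⟨f 0, ⟨⟨fun a => f a.succ, fun h => f.toHom.map_adj ((wheelG_adj_succ_succ hm).2 h)⟩,
      f.injective.comp (Fin.succ_injective m)⟩, fun a => f.toHom.map_adj (wheelG_adj_zero_succ a)⟩
  · rintro ⟨v, r, hv⟩
    refine ⟨⟨⟨Fin.cons v r, fun {a b} hab => ?_⟩, Fin.cons_injective_iff.2 ⟨?_, r.injective⟩⟩⟩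
    · cases a using Fin.cases <;> cases b using Fin.cases
      · exact (hab.ne rfl).elim
      · exact hv _
      · exact (hv _).symm
      · exact r.toHom.map_adj ((wheelG_adj_succ_succ hm).1 hab)
    · rintro ⟨a, ha⟩
      exact (hv a).ne ha.symm

end Wheel

section Circulant

theorem isRegularOfDegree_circulantGraph {Γ : Type*} [AddGroup Γ] [Fintype Γ] [DecidableEq Γ]
    {s : Finset Γ} (h0 : 0 ∉ s) (hneg : ∀ x ∈ s, -x ∈ s) :
    (circulantGraph (s : Set Γ)).IsRegularOfDegree s.card := by
  intro v
  have hnbr : (circulantGraph (s : Set Γ)).neighborFinset v = s.image (· + v) := by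
    ext w
    rw [mem_neighborFinset, circulantGraph_adj, Finset.mem_image]
    constructor
    · rintro ⟨-, h | h⟩
      · exact ⟨w - v, neg_sub v w ▸ hneg _ h, sub_add_cancel w v⟩
      · exact ⟨w - v, h, sub_add_cancel w v⟩
    · rintro ⟨x, hx, rfl⟩
      refine ⟨fun h => h0 ?_, Or.inr (by simpa using hx)⟩
      rwa [right_eq_add.1 h] at hx
  rw [degree, hnbr, Finset.card_image_of_injective _ (add_left_injective v)]

theorem exists_symmetric_finset_zmod {c q : ℕ} (h : 2 * q < c) :
    ∃ s : Finset (ZMod c), s.card = 2 * q ∧ 0 ∉ s ∧ ∀ x ∈ s, -x ∈ s := by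
  have hinj : Set.InjOn ((↑) : ℤ → ZMod c) (Set.Icc (-q) q) := by
    intro x hx y hy hxy
    have hdvd := (ZMod.intCast_eq_intCast_iff_dvd_sub x y c).1 hxy
    have habs : |y - x| < c := by
      rw [abs_lt]
      constructor <;> linarith [hx.1, hx.2, hy.1, hy.2, (by exact_mod_cast h : (2 * q : ℤ) < c)]
    exact (sub_eq_zero.1 (Int.eq_zero_of_abs_lt_dvd hdvd habs)).symm
  have hmem : (0 : ℤ) ∈ Finset.Icc (-q : ℤ) q := by simp
  refine ⟨((Finset.Icc (-q : ℤ) q).erase 0).image (↑), ?_, ?_, ?_⟩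
  · rw [Finset.card_image_of_injOn (hinj.mono fun x hx => ?_), Finset.card_erase_of_mem hmem,
      Int.card_Icc]
    · omega
    · simpa using Finset.mem_of_mem_erase hx
  · rw [Finset.mem_image]
    rintro ⟨x, hx, hx0⟩
    obtain ⟨hne, hx⟩ := Finset.mem_erase.1 hx
    exact hne (hinj (Finset.mem_Icc.1 hx) (Finset.mem_Icc.1 hmem) (by simpa using hx0))
  · simp only [Finset.mem_image, Finset.mem_erase, Finset.mem_Icc]
    rintro _ ⟨x, ⟨hne, hl, hu⟩, rfl⟩
    exact ⟨-x, ⟨neg_ne_zero.2 hne, by omega, by omega⟩, Int.cast_neg x⟩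

theorem isSparse_cycleGraph_of_degree {V : Type*} [Fintype V] {G : SimpleGraph V}
    [DecidableRel G.Adj] {m : ℕ} (hm : 2 ≤ m) (hcard : Fintype.card V < m)
    (hdeg : ∀ v, 2 * G.degree v < m) : IsSparse (cycleGraph m) G := by
  refine ⟨free_of_card_lt (by simpa using hcard), fun v => ?_⟩
  rw [← coe_neighborFinset, Set.encard_coe_eq_coe_finsetCard, card_neighborFinset_eq_degree]
  exact lt_vertexCoverNum_cycleGraph hm (hdeg v)

-- `G` is regular of degree `2 * (c / 4)`, close to `c / 2`; even degrees exist for all `c`.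
theorem exists_isSparse_cycleGraph_and_compl {c m : ℕ} (hc₀ : 0 < c) (hc : c < m)
    (hm : 4 ∣ m → c + 1 < m) :
    ∃ G : SimpleGraph (ZMod c), IsSparse (cycleGraph m) G ∧ IsSparse (cycleGraph m) Gᶜ := by
  classical
  have : NeZero c := ⟨hc₀.ne'⟩
  obtain ⟨s, hs, h0, hneg⟩ := exists_symmetric_finset_zmod (c := c) (q := c / 4) (by omega)
  have hreg := isRegularOfDegree_circulantGraph h0 hneg
  have hcard : Fintype.card (ZMod c) = c := ZMod.card c
  refine ⟨circulantGraph s, isSparse_cycleGraph_of_degree (by omega) (by omega) fun v => ?_,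
    isSparse_cycleGraph_of_degree (by omega) (by omega) fun v => ?_⟩
  · rw [hreg.degree_eq]
    omega
  · rw [hreg.compl.degree_eq]
    omega

end Circulant

/-- A Gallai `k`-coloring of the complete graph on `V`. The values `color x x` are irrelevant. -/
structure GallaiColoring (V : Type*) (k : ℕ) where
  color : V → V → Fin k
  symm : ∀ x y, color x y = color y x
  noRainbowTriangle : NoRainbowTriangle (⊤ : SimpleGraph V) color

namespace GallaiColoring

variable {V W ι : Type*} {k l : ℕ}

/-- The graph formed by the edges of color `i`. -/
def colorGraph (C : GallaiColoring V k) (i : Fin k) : SimpleGraph V where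
  Adj x y := x ≠ y ∧ C.color x y = i
  symm := ⟨fun x y h => ⟨h.1.symm, C.symm y x ▸ h.2⟩⟩
  loopless := ⟨fun _ h => h.1 rfl⟩

theorem colorGraph_adj {C : GallaiColoring V k} {i : Fin k} {x y : V} :
    (C.colorGraph i).Adj x y ↔ x ≠ y ∧ C.color x y = i := Iff.rfl

theorem isMonoCopy_top_iff {α : Type*} {H : SimpleGraph α} (C : GallaiColoring V k) :
    IsMonoCopy ⊤ C.color H ↔ ∃ i, H ⊑ C.colorGraph i := by
  constructor
  · rintro ⟨f, i, hf, h⟩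
    exact ⟨i, ⟨⟨⟨f, fun hab => ⟨(h _ _ hab).1, (h _ _ hab).2⟩⟩, hf⟩⟩⟩
  · rintro ⟨i, ⟨f⟩⟩
    exact ⟨f, i, f.injective, fun a b hab => f.toHom.map_adj hab⟩

/-- The coloring obtained by pulling back along an embedding of vertex sets. -/
def comap (C : GallaiColoring V k) (e : W ↪ V) : GallaiColoring W k where
  color x y := C.color (e x) (e y)
  symm x y := C.symm (e x) (e y)
  noRainbowTriangle := fun ⟨x, y, z, hxy, hyz, hxz, h⟩ =>
    C.noRainbowTriangle ⟨e x, e y, e z, e.injective.ne hxy, e.injective.ne hyz,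
      e.injective.ne hxz, h⟩

theorem colorGraph_comap (C : GallaiColoring V k) (e : W ↪ V) (i : Fin k) :
    (C.comap e).colorGraph i = (C.colorGraph i).comap e := by
  ext x y
  simp only [comap, colorGraph_adj, comap_adj, e.injective.ne_iff]

/-- The coloring obtained by renaming the colors along an embedding. -/
def recolor (C : GallaiColoring V k) (e : Fin k ↪ Fin l) : GallaiColoring V l where
  color x y := e (C.color x y)
  symm x y := congrArg e (C.symm x y)
  noRainbowTriangle := fun ⟨x, y, z, hxy, hyz, hxz, h₁, h₂, h₃⟩ =>
    C.noRainbowTriangle ⟨x, y, z, hxy, hyz, hxz, ne_of_apply_ne e h₁, ne_of_apply_ne e h₂,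
      ne_of_apply_ne e h₃⟩

theorem colorGraph_recolor_apply (C : GallaiColoring V k) (e : Fin k ↪ Fin l) (i : Fin k) :
    (C.recolor e).colorGraph (e i) = C.colorGraph i := by
  ext x y
  simp only [recolor, colorGraph_adj, e.injective.eq_iff]

theorem colorGraph_recolor_of_notMem_range (C : GallaiColoring V k) {e : Fin k ↪ Fin l}
    {i : Fin l} (hi : i ∉ Set.range e) : (C.recolor e).colorGraph i = ⊥ := by
  ext x y
  simp only [bot_adj, iff_false]
  exact fun h => hi ⟨_, h.2⟩

open scoped Classical in
/-- The coloring with color `a` on the edges of `G` and color `b` on the other edges. -/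
noncomputable def ofGraph (G : SimpleGraph V) (a b : Fin k) : GallaiColoring V k where
  color x y := if G.Adj x y then a else b
  symm x y := by simp only [G.adj_comm]
  noRainbowTriangle := by
    rintro ⟨x, y, z, -, -, -, h⟩
    grind

theorem colorGraph_ofGraph_left (G : SimpleGraph V) {a b : Fin k} (hab : a ≠ b) :
    (ofGraph G a b).colorGraph a = G := by
  ext x y
  simp only [ofGraph, colorGraph_adj, ite_eq_left_iff, hab.symm, imp_false, not_not]
  exact and_iff_right_of_imp Adj.ne

theorem colorGraph_ofGraph_right (G : SimpleGraph V) {a b : Fin k} (hab : a ≠ b) :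
    (ofGraph G a b).colorGraph b = Gᶜ := by
  ext x y
  simp only [ofGraph, colorGraph_adj, ite_eq_right_iff, hab, imp_false, compl_adj]

theorem colorGraph_ofGraph_of_ne (G : SimpleGraph V) {a b i : Fin k} (ha : i ≠ a) (hb : i ≠ b) :
    (ofGraph G a b).colorGraph i = ⊥ := by
  ext x y
  simp only [ofGraph, colorGraph_adj, bot_adj, iff_false]
  grind

section Substitute

variable {V : ι → Type*}

open scoped Classical in
/-- The coloring obtained from `C` by replacing every vertex `p` by the coloring `D p`. -/
noncomputable def substitute (C : GallaiColoring ι k) (D : ∀ p, GallaiColoring (V p) k) :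
    GallaiColoring (Σ p, V p) k where
  color u v := if h : u.1 = v.1 then (D v.1).color (h ▸ u.2) v.2 else C.color u.1 v.1
  symm := by
    rintro ⟨p, x⟩ ⟨q, y⟩
    by_cases h : p = q
    · subst h
      simpa using (D p).symm x y
    · simpa [h, Ne.symm h] using C.symm p q
  noRainbowTriangle := by
    rintro ⟨⟨p, x⟩, ⟨q, y⟩, ⟨r, z⟩, hxy, hyz, hxz, h₁, h₂, h₃⟩
    by_cases hpq : p = q
    · subst hpq
      by_cases hpr : p = r
      · subst hpr
        exact (D p).noRainbowTriangle
          ⟨x, y, z, by simpa using hxy, by simpa using hyz, by simpa using hxz,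
            by simpa using And.intro h₁ (And.intro h₂ h₃)⟩
      · exact h₂ (by simp [hpr])
    · by_cases hqr : q = r
      · subst hqr
        exact h₃ (by simp [hpq])
      · by_cases hpr : p = r
        · subst hpr
          exact h₁ (by simpa [hpq, hqr] using C.symm p q)
        · exact C.noRainbowTriangle
            ⟨p, q, r, hpq, hqr, hpr, by simpa [hpq, hqr, hpr] using And.intro h₁ (And.intro h₂ h₃)⟩

theorem colorGraph_substitute (C : GallaiColoring ι k) (D : ∀ p, GallaiColoring (V p) k)
    (i : Fin k) :
    (C.substitute D).colorGraph i = substitution (C.colorGraph i) fun p => (D p).colorGraph i := by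
  ext ⟨p, x⟩ ⟨q, y⟩
  by_cases h : p = q
  · subst h
    simp [substitution_adj_mk_mk, colorGraph_adj, substitute]
  · rw [substitution_adj_of_fst_ne h]
    simp [colorGraph_adj, substitute, h]

end Substitute

end GallaiColoring

section RamseyNumber

variable {α : Type*} {H : SimpleGraph α} {k N : ℕ}

theorem lt_gallaiRamsey_iff [Finite α] :
    N < GallaiRamsey k H ↔ ∃ C : GallaiColoring (Fin N) k, ¬ IsMonoCopy ⊤ C.color H := by
  constructor
  · intro h
    have hN := Nat.notMem_of_lt_sInf h
    simp only [Set.mem_ofPred_eq, not_forall] at hN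
    obtain ⟨c, hsymm, hc, hmono⟩ := hN
    exact ⟨⟨c, hsymm, hc⟩, hmono⟩
  · rintro ⟨C, hC⟩
    obtain ⟨R, hR⟩ := exists_isContained_of_le_card (κ := Fin k) H
    have hne : {M | ∀ c : Fin M → Fin M → Fin k, (∀ x y, c x y = c y x) →
        NoRainbowTriangle ⊤ c → IsMonoCopy ⊤ c H}.Nonempty := by
      refine ⟨R, fun c hsymm hc => ?_⟩
      exact (GallaiColoring.isMonoCopy_top_iff ⟨c, hsymm, hc⟩).2
        (hR _ (fun x y hxy => ⟨c x y, hxy, rfl⟩) (by simp))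
    by_contra! hle
    let C' := C.comap (Fin.castLEEmb hle)
    obtain ⟨i, hi⟩ := C'.isMonoCopy_top_iff.1
      (Nat.sInf_mem hne C'.color C'.symm C'.noRainbowTriangle)
    rw [C.colorGraph_comap] at hi
    exact hC (C.isMonoCopy_top_iff.2 ⟨i, hi.trans (SimpleGraph.Embedding.comap _ _).isContained⟩)

theorem noRainbowTriangle_fin_two {V : Type*} (G : SimpleGraph V) (c : V → V → Fin 2) :
    NoRainbowTriangle G c := by
  rintro ⟨x, y, z, -, -, -, h⟩
  omega

theorem ramsey2_eq_gallaiRamsey : Ramsey2 H = GallaiRamsey 2 H := by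
  simp only [Ramsey2, GallaiRamsey, noRainbowTriangle_fin_two, forall_const]

end RamseyNumber

section Admissible

variable {α V ι : Type*} {A : SimpleGraph α} {k l : ℕ} {F T : Set (Fin k)} {a b : Fin k}

/-- The invariant of the construction: no color contains a cone over `A`, the colors outside the
set `F` of full colors are moreover sparse, and only the colors in `F` and in the set `T` of thin
colors are used at all. -/
structure GallaiColoring.IsAdmissible (A : SimpleGraph α) (F T : Set (Fin k))
    (C : GallaiColoring V k) : Prop where
  coneFree (i : Fin k) : ConeFree A (C.colorGraph i)
  isSparse {i : Fin k} (hi : i ∉ F) : IsSparse A (C.colorGraph i)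
  eq_bot {i : Fin k} (hF : i ∉ F) (hT : i ∉ T) : C.colorGraph i = ⊥

namespace GallaiColoring.IsAdmissible

theorem of_isSparse {C : GallaiColoring V k} (h : ∀ i, IsSparse A (C.colorGraph i))
    (hT : ∀ i ∉ T, C.colorGraph i = ⊥) : C.IsAdmissible A ∅ T :=
  ⟨fun i => (h i).coneFree, fun _ => h _, fun _ => hT _⟩

theorem comap {W : Type*} {C : GallaiColoring V k} (h : C.IsAdmissible A F T) (e : W ↪ V) :
    (C.comap e).IsAdmissible A F T := by
  have hsub (i : Fin k) : (C.comap e).colorGraph i ⊑ C.colorGraph i :=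
    C.colorGraph_comap e i ▸ (SimpleGraph.Embedding.comap e _).isContained
  refine ⟨fun i => (h.coneFree i).of_isContained (hsub i),
    fun hi => (h.isSparse hi).of_isContained (hsub _), fun hF hT => ?_⟩
  rw [colorGraph_comap, h.eq_bot hF hT, comap_bot]

theorem recolor {C : GallaiColoring V k} (hA : A ≠ ⊥) (hC : ∀ i, ConeFree A (C.colorGraph i))
    (e : Fin k ↪ Fin l) : (C.recolor e).IsAdmissible A (Set.range e) ∅ := by
  refine ⟨fun i => ?_, fun hi => ?_, fun hi _ => C.colorGraph_recolor_of_notMem_range hi⟩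
  · by_cases hi : i ∈ Set.range e
    · obtain ⟨i, rfl⟩ := hi
      exact C.colorGraph_recolor_apply e i ▸ hC i
    · exact C.colorGraph_recolor_of_notMem_range hi ▸ (isSparse_bot hA).coneFree
  · exact C.colorGraph_recolor_of_notMem_range hi ▸ isSparse_bot hA

theorem ofGraph {G : SimpleGraph V} (hab : a ≠ b) (hG : IsSparse A G) (hGc : IsSparse A Gᶜ) :
    (ofGraph G a b).IsAdmissible A ∅ {a, b} := by
  have hbot : ∀ i ∉ ({a, b} : Set (Fin k)), (GallaiColoring.ofGraph G a b).colorGraph i = ⊥ := by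
    intro i hi
    rw [Set.mem_insert_iff, Set.mem_singleton_iff, not_or] at hi
    exact colorGraph_ofGraph_of_ne G hi.1 hi.2
  refine of_isSparse (fun i => ?_) hbot
  by_cases hi : i ∈ ({a, b} : Set (Fin k))
  · obtain rfl | rfl := hi
    · rwa [colorGraph_ofGraph_left G hab]
    · rwa [colorGraph_ofGraph_right G hab]
  · exact hbot i hi ▸ hG.of_isContained (.of_le bot_le)

theorem substitute {V : ι → Type*} {D : ∀ p, GallaiColoring (V p) k} {P : SimpleGraph ι}
    {S : ι → Set (Fin k)} (hA : A.Connected) (hP : P.CliqueFree 3) (hPc : Pᶜ.CliqueFree 3)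
    (hab : a ≠ b) (ha : a ∉ F) (hb : b ∉ F) (hS : ∀ p, S p ⊆ insert a (insert b T))
    (hSa : ∀ p q, P.Adj p q → a ∉ S p ∨ a ∉ S q)
    (hSb : ∀ p q, Pᶜ.Adj p q → b ∉ S p ∨ b ∉ S q)
    (hD : ∀ p, (D p).IsAdmissible A F (S p)) :
    ((GallaiColoring.ofGraph P a b).substitute D).IsAdmissible A (insert a (insert b F)) T := by
  have hfresh {c : Fin k} (hc : c ∉ F) {R : SimpleGraph ι} (hR : R.CliqueFree 3)
      (hRS : ∀ p q, R.Adj p q → c ∉ S p ∨ c ∉ S q) :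
      ConeFree A (substitution R fun p => (D p).colorGraph c) :=
    .substitution hA hR (fun p q h => (hRS p q h).imp ((hD p).eq_bot hc) ((hD q).eq_bot hc))
      fun p => (hD p).isSparse hc
  have hold {i : Fin k} (hia : i ≠ a) (hib : i ≠ b) :
      ((GallaiColoring.ofGraph P a b).substitute D).colorGraph i =
        substitution ⊥ fun p => (D p).colorGraph i := by
    rw [colorGraph_substitute, colorGraph_ofGraph_of_ne P hia hib]
  refine ⟨fun i => ?_, fun {i} hi => ?_, fun {i} hi hT => ?_⟩
  · rcases eq_or_ne i a with rfl | hia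
    · rw [colorGraph_substitute, colorGraph_ofGraph_left P hab]
      exact hfresh ha hP hSa
    rcases eq_or_ne i b with rfl | hib
    · rw [colorGraph_substitute, colorGraph_ofGraph_right P hab]
      exact hfresh hb hPc hSb
    rw [hold hia hib]
    exact .substitution_bot fun p => (hD p).coneFree i
  · simp only [Set.mem_insert_iff, not_or] at hi
    rw [hold hi.1 hi.2.1]
    exact .substitution_bot hA fun p => (hD p).isSparse hi.2.2
  · simp only [Set.mem_insert_iff, not_or] at hi
    have hiS (p : ι) : i ∉ S p := fun h => by simpa [hi, hT] using hS p h
    rw [hold hi.1 hi.2.1]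
    simp only [(hD _).eq_bot hi.2.2 (hiS _), substitution_bot_bot]

end GallaiColoring.IsAdmissible

end Admissible

section Pentagon

variable {α : Type*} {A : SimpleGraph α} {k N : ℕ} {F T : Set (Fin k)}

/-- There is an admissible coloring of the complete graph on `N` vertices. -/
def Realizable (A : SimpleGraph α) (F T : Set (Fin k)) (N : ℕ) : Prop :=
  ∃ C : GallaiColoring (Fin N) k, C.IsAdmissible A F T

theorem GallaiColoring.IsAdmissible.realizable {V : Type*} [Fintype V] {C : GallaiColoring V k}
    (h : C.IsAdmissible A F T) (hN : N ≤ Fintype.card V) : Realizable A F T N := by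
  obtain ⟨e⟩ := Function.Embedding.nonempty_of_card_le ((Fintype.card_fin N).trans_le hN)
  exact ⟨C.comap e, h.comap e⟩

theorem Realizable.mono_size {M : ℕ} (h : Realizable A F T N) (hMN : M ≤ N) :
    Realizable A F T M := by
  obtain ⟨C, hC⟩ := h
  exact hC.realizable (by simpa using hMN)

theorem Realizable.mono_thin {T' : Set (Fin k)} (h : Realizable A F T N) (hT : T ⊆ T') :
    Realizable A F T' N := by
  obtain ⟨C, hC⟩ := h
  exact ⟨C, hC.coneFree, hC.isSparse, fun hF hT' => hC.eq_bot hF fun h => hT' (hT h)⟩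

theorem cycleGraph_five_cliqueFree_three : (cycleGraph 5).CliqueFree 3 := by
  unfold CliqueFree
  decide

theorem compl_cycleGraph_five_cliqueFree_three : (cycleGraph 5)ᶜ.CliqueFree 3 := by
  unfold CliqueFree
  decide

theorem Realizable.pentagon {a b : Fin k} {N₀ N₁ N₂ : ℕ} (hA : A.Connected) (hab : a ≠ b)
    (haF : a ∉ F) (hbF : b ∉ F) (haT : a ∉ T) (hbT : b ∉ T) (h₀ : Realizable A F T N₀)
    (h₁ : Realizable A F (insert a T) N₁) (h₂ : Realizable A F (insert b T) N₂) :
    Realizable A (insert a (insert b F)) T (N₀ + 2 * N₁ + 2 * N₂) := by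
  -- Parts 1 and 4 are nonadjacent in the pentagon, parts 2 and 3 are nonadjacent in its complement.
  let S : Fin 5 → Set (Fin k) := ![T, insert a T, insert b T, insert b T, insert a T]
  let size : Fin 5 → ℕ := ![N₀, N₁, N₂, N₂, N₁]
  have hparts : ∀ p, Realizable A F (S p) (size p) := by
    intro p
    fin_cases p <;> assumption
  choose D hD using hparts
  have hTab : T ⊆ insert a (insert b T) := (Set.subset_insert b T).trans (Set.subset_insert a _)
  refine (GallaiColoring.IsAdmissible.substitute hA cycleGraph_five_cliqueFree_three
    compl_cycleGraph_five_cliqueFree_three hab haF hbF (S := S) (T := T) ?_ ?_ ?_ hD).realizable ?_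
  · intro p
    fin_cases p <;> simp [S, Set.insert_subset_iff, Set.subset_insert, hTab]
  · intro p q
    fin_cases p <;> fin_cases q <;> simp [S, cycleGraph_adj, haT, hab]
  · intro p q
    fin_cases p <;> fin_cases q <;> simp [S, cycleGraph_adj, hbT, hab.symm]
  · simp only [Fintype.card_sigma, Fintype.card_fin, Fin.sum_univ_five, Matrix.cons_val, size]
    omega

theorem insert_insert_setOf_val_lt {r : ℕ} (hr : r + 1 < k) :
    insert ⟨r, by omega⟩ (insert ⟨r + 1, hr⟩ {i : Fin k | (i : ℕ) < r}) =
      {i : Fin k | (i : ℕ) < r + 2} := by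
  ext i
  simp only [Set.mem_insert_iff, Set.mem_ofPred_eq, Fin.ext_iff]
  omega

theorem Realizable.add_two {r M : ℕ} (hA : A.Connected) (hr : r + 2 ≤ k)
    (hT : ∀ i ∈ T, r + 2 ≤ (i : ℕ)) (h : Realizable A {i | (i : ℕ) < r} T N)
    (hM : ∀ a : Fin k, r ≤ a → (∀ i ∈ T, a < i) → Realizable A {i | (i : ℕ) < r} (insert a T) M) :
    Realizable A {i | (i : ℕ) < r + 2} T (N + 4 * M) := by
  have hlt {c : ℕ} (hc : c < r + 2) : ∀ i ∈ T, (⟨c, by omega⟩ : Fin k) < i :=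
    fun i hi => hc.trans_le (hT i hi)
  rw [← insert_insert_setOf_val_lt (by omega), show N + 4 * M = N + 2 * M + 2 * M by ring]
  exact .pentagon hA (by simp) (by simp) (by simp)
    (fun h => (hlt (by omega) _ h).false) (fun h => (hlt (by omega) _ h).false) h
    (hM _ le_rfl (hlt (by omega))) (hM _ (Nat.le_succ r) (hlt (by omega)))

theorem Realizable.five_pow_mul {j : ℕ} (hA : A.Connected) (hj : 2 * j ≤ k)
    (hT : ∀ i ∈ T, 2 * j ≤ (i : ℕ)) (h : Realizable A ∅ T N) :
    Realizable A {i | (i : ℕ) < 2 * j} T (5 ^ j * N) := by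
  induction j with
  | zero => simpa using h
  | succ j ih =>
    have ih := ih (by omega) fun i hi => (hT i hi).trans' (by omega)
    rw [show 5 ^ (j + 1) * N = 5 ^ j * N + 4 * (5 ^ j * N) by ring]
    exact ih.add_two hA hj hT fun a _ _ => ih.mono_thin (Set.subset_insert a T)

theorem Realizable.singleton_thin {s c j : ℕ} {e : Fin k} (hA : A.Connected)
    (he : 2 * j ≤ (e : ℕ)) (hs : Realizable A ∅ {e} s)
    (hc : ∀ a, a ≠ e → Realizable A ∅ {a, e} c) :
    Realizable A {i | (i : ℕ) < 2 * j} {e} (s + c * (5 ^ j - 1)) := by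
  induction j with
  | zero => simpa using hs
  | succ j ih =>
    have hsize : s + c * (5 ^ (j + 1) - 1) = s + c * (5 ^ j - 1) + 4 * (5 ^ j * c) := by
      obtain ⟨x, hx⟩ := Nat.exists_eq_add_of_le' (Nat.one_le_pow' j 4)
      rw [pow_succ, hx, show (x + 1) * 5 - 1 = x + 4 * (x + 1) by omega, Nat.add_sub_cancel]
      ring
    rw [hsize]
    refine (ih (by omega)).add_two hA (he.trans e.isLt.le) (by rintro i rfl; exact he)
      fun a ha hae => ?_
    refine (hc a (hae e rfl).ne).five_pow_mul hA (by omega) ?_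
    rintro i (rfl | rfl)
    · exact ha
    · omega

theorem Realizable.empty_thin {n s c j : ℕ} (hA : A.Connected) (hj : 2 * j + 2 ≤ k)
    (hn : Realizable A {i : Fin k | (i : ℕ) < 2} ∅ n) (hs : ∀ e : Fin k, Realizable A ∅ {e} s)
    (hc : ∀ a e : Fin k, a ≠ e → Realizable A ∅ {a, e} c) :
    Realizable A {i : Fin k | (i : ℕ) < 2 * j + 2} ∅
      (n + 4 * ∑ i ∈ Finset.range j, (s + c * (5 ^ (i + 1) - 1))) := by
  induction j with
  | zero => simpa using hn
  | succ j ih =>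
    rw [Finset.sum_range_succ, mul_add 4, ← add_assoc]
    refine (ih (by omega)).add_two hA (by omega) (by simp) fun a ha _ => ?_
    rw [insert_empty_eq]
    exact .singleton_thin (j := j + 1) hA ha (hs a) fun b hb => hc b a hb

theorem four_mul_sum_add (s c j : ℕ) :
    4 * ∑ i ∈ Finset.range j, (s + c * (5 ^ (i + 1) - 1)) + 2 * c * (2 * j) =
      5 * c * (5 ^ j - 1) + 2 * s * (2 * j) := by
  induction j with
  | zero => simp
  | succ j ih =>
    obtain ⟨x, hx⟩ := Nat.exists_eq_add_of_le' (Nat.one_le_pow' j 4)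
    rw [hx, Nat.add_sub_cancel] at ih
    rw [Finset.sum_range_succ, pow_succ, hx, show (x + 1) * 5 - 1 = 5 * x + 4 by omega]
    linarith

theorem le_add_four_mul_sum {n s c d : ℕ} (hd : 2 * c ≤ d + 2 * s) (j : ℕ) :
    n + 5 * c * (5 ^ j - 1) - d * (2 * j) ≤
      n + 4 * ∑ i ∈ Finset.range j, (s + c * (5 ^ (i + 1) - 1)) := by
  have hsum := four_mul_sum_add s c j
  have hmul := Nat.mul_le_mul_right (2 * j) hd
  rw [add_mul] at hmul
  omega

end Pentagon

section Main

variable {k m n c d j : ℕ}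

theorem realizable_cycleGraph_singleton (hm : 2 ≤ m) (e : Fin k) :
    Realizable (cycleGraph m) ∅ {e} ((m + 1) / 2) := by
  have : NeZero m := ⟨by omega⟩
  have hcover : ENat.card (Fin ((m + 1) / 2)) ≤ (cycleGraph m).vertexCoverNum := by
    have := Order.add_one_le_of_lt
      (lt_vertexCoverNum_cycleGraph (d := (m + 1) / 2 - 1) hm (by omega))
    rw [ENat.card_eq_coe_fintype_card, Fintype.card_fin]
    rwa [← Nat.cast_add_one, Nat.sub_add_cancel (by omega)] at this
  exact ⟨.ofGraph ⊤ e e, .of_isSparse (fun _ => isSparse_of_card_le hcover)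
    fun i hi => GallaiColoring.colorGraph_ofGraph_of_ne ⊤ hi hi⟩

theorem realizable_cycleGraph_pair (hc₀ : 0 < c) (hc : c < m) (hm : 4 ∣ m → c + 1 < m)
    {a b : Fin k} (hab : a ≠ b) : Realizable (cycleGraph m) ∅ {a, b} c := by
  have : NeZero c := ⟨hc₀.ne'⟩
  obtain ⟨G, hG, hGc⟩ := exists_isSparse_cycleGraph_and_compl hc₀ hc hm
  exact (GallaiColoring.IsAdmissible.ofGraph hab hG hGc).realizable (ZMod.card c).ge

theorem realizable_cycleGraph_of_lt_ramsey2 (hk : 2 ≤ k) (hm : 2 ≤ m)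
    (hn : n < Ramsey2 (wheelG m)) :
    Realizable (cycleGraph m) {i : Fin k | (i : ℕ) < 2} ∅ n := by
  rw [ramsey2_eq_gallaiRamsey, lt_gallaiRamsey_iff] at hn
  obtain ⟨C, hC⟩ := hn
  have hbot : cycleGraph m ≠ ⊥ := fun h => by
    simpa [h] using lt_vertexCoverNum_cycleGraph (d := 0) hm (by omega)
  have hcone (i : Fin 2) : ConeFree (cycleGraph m) (C.colorGraph i) := of_not_not fun h =>
    hC (C.isMonoCopy_top_iff.2 ⟨i, (wheelG_isContained_iff hm).2 h⟩)
  have hrange : Set.range (Fin.castLEEmb hk) = {i : Fin k | (i : ℕ) < 2} := Fin.range_castLE hk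
  exact ⟨_, hrange ▸ GallaiColoring.IsAdmissible.recolor hbot hcone (Fin.castLEEmb hk)⟩

theorem lt_gallaiRamsey_wheelG (hk : 2 * j + 2 ≤ k) (hc₀ : 0 < c) (hc : c < m)
    (hm : 4 ∣ m → c + 1 < m) (hd : 2 * c ≤ d + 2 * ((m + 1) / 2)) (hn : n < Ramsey2 (wheelG m)) :
    n + 5 * c * (5 ^ j - 1) - d * (2 * j) < GallaiRamsey k (wheelG m) := by
  have hm₂ : 2 ≤ m := by omega
  obtain ⟨l, rfl⟩ : ∃ l, m = l + 1 := ⟨m - 1, by omega⟩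
  have hreal := Realizable.empty_thin cycleGraph_connected hk
    (realizable_cycleGraph_of_lt_ramsey2 (by omega) hm₂ hn)
    (realizable_cycleGraph_singleton hm₂) fun _ _ => realizable_cycleGraph_pair hc₀ hc hm
  obtain ⟨C, hC⟩ := hreal.mono_size (le_add_four_mul_sum hd j)
  refine lt_gallaiRamsey_iff.2 ⟨C, fun hmono => ?_⟩
  obtain ⟨i, hi⟩ := C.isMonoCopy_top_iff.1 hmono
  exact (wheelG_isContained_iff hm₂).1 hi (hC.coneFree i)

theorem wheel_gallai_lower_even_k_general (hk : 2 * j + 2 ≤ k) (hc₀ : 0 < c) (hc : c < m)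
    (hm : 4 ∣ m → c + 1 < m) (hd : 2 * c ≤ d + 2 * ((m + 1) / 2))
    (h2 : ∃ χ : Fin n → Fin n → Fin 2, (∀ x y, χ x y = χ y x) ∧
      ¬ IsMonoCopy (⊤ : SimpleGraph (Fin n)) χ (wheelG m)) :
    (∃ χ : Fin (n + 5 * c * (5 ^ j - 1) - d * (2 * j)) →
        Fin (n + 5 * c * (5 ^ j - 1) - d * (2 * j)) → Fin k,
      (∀ x y, χ x y = χ y x) ∧
      NoRainbowTriangle ⊤ χ ∧ ¬ IsMonoCopy ⊤ χ (wheelG m)) ∧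
    Ramsey2 (wheelG m) + 5 * c * (5 ^ j - 1) - d * (2 * j) ≤ GallaiRamsey k (wheelG m) := by
  obtain ⟨χ, hsymm, hχ⟩ := h2
  have hn : n < Ramsey2 (wheelG m) := ramsey2_eq_gallaiRamsey.symm ▸
    lt_gallaiRamsey_iff.2 ⟨⟨χ, hsymm, noRainbowTriangle_fin_two ⊤ χ⟩, hχ⟩
  obtain ⟨C, hC⟩ := lt_gallaiRamsey_iff.1 (lt_gallaiRamsey_wheelG hk hc₀ hc hm hd hn)
  refine ⟨⟨C.color, C.symm, C.noRainbowTriangle, hC⟩, ?_⟩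
  have := lt_gallaiRamsey_wheelG hk hc₀ hc hm hd (Nat.sub_one_lt_of_lt hn)
  omega

end Main

/-- Even `k ≥ 2`, even `m ≥ 6`: from a 2-coloring of `K_n` with no monochromatic
wheel `W_m`, one gets a Gallai `k`-coloring of a larger complete graph with no
monochromatic `W_m`; consequently the Gallai–Ramsey lower bound. -/
theorem wheel_gallai_lower_even_k (k m n c d : ℕ) (hk : 2 ≤ k) (hke : k % 2 = 0)
    (hm : 6 ≤ m) (hme : m % 2 = 0)
    (hcd : (m % 4 = 0 ∧ c = m - 2 ∧ d = m - 4) ∨ (m % 4 = 2 ∧ c = m - 1 ∧ d = m - 2))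
    (h2 : ∃ χ : Fin n → Fin n → Fin 2, (∀ x y, χ x y = χ y x) ∧
      ¬ IsMonoCopy (⊤ : SimpleGraph (Fin n)) χ (wheelG m)) :
    (∃ χ : Fin (n + 5 * c * (5 ^ ((k - 2) / 2) - 1) - d * (k - 2)) →
        Fin (n + 5 * c * (5 ^ ((k - 2) / 2) - 1) - d * (k - 2)) → Fin k,
      (∀ x y, χ x y = χ y x) ∧
      NoRainbowTriangle (⊤ : SimpleGraph (Fin (n + 5 * c * (5 ^ ((k - 2) / 2) - 1) - d * (k - 2)))) χ ∧
      ¬ IsMonoCopy (⊤ : SimpleGraph (Fin (n + 5 * c * (5 ^ ((k - 2) / 2) - 1) - d * (k - 2)))) χ (wheelG m)) ∧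
    Ramsey2 (wheelG m) + 5 * c * (5 ^ ((k - 2) / 2) - 1) - d * (k - 2) ≤
      GallaiRamsey k (wheelG m) := by
  have hj : 2 * ((k - 2) / 2) = k - 2 := by omega
  have h := wheel_gallai_lower_even_k_general (k := k) (m := m) (n := n) (c := c) (d := d)
    (j := (k - 2) / 2) (by omega) (by omega) (by omega) (by omega) (by omega) h2
  rwa [hj] at h
end

section
/- For every even integer m ≥ 6, there exists a Gallai 3-coloring of the complete graph on 5m vertices with no monochromatic copy of the wheel W_m. Consequently GR_3(W_m) ≥ 5m + 1. -/
open SimpleGraph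

/-!
Color the edges of `K₅` with two colors so that both color classes are pentagons, and blow every
vertex up to a block of `m` vertices whose inner edges get the third color. All colors of a triangle
are determined by the blocks of its vertices, so a rainbow triangle would need three different
blocks, between which only two colors occur. A connected monochromatic graph in the third color
stays inside one block, and a monochromatic graph in either of the other colors maps homomorphically
to the pentagon; the wheel `W_m` is too large for the former and contains a triangle, which excludes
the latter. Since `GR_k` is an infimum in `ℕ`, where `sInf ∅ = 0`, the lower bound also needs
Ramsey's theorem.
-/

open Finset in
theorem exists_le_card_fiber_of_sum_le {ι κ : Type*} [Fintype κ] [Nonempty κ] [DecidableEq κ]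
    {S : Finset ι} {N : κ → ℕ} (f : ι → κ) (hN : ∑ i, N i ≤ #S) :
    ∃ i, N i ≤ #{x ∈ S | f x = i} := by
  have hfiber : #S = ∑ i, #{x ∈ S | f x = i} :=
    card_eq_sum_card_fiberwise fun x _ => mem_univ (f x)
  obtain ⟨i, -, hi⟩ := exists_le_of_sum_le univ_nonempty (hN.trans_eq hfiber)
  exact ⟨i, hi⟩

open Finset in
theorem exists_ramsey_bound {κ : Type*} [Finite κ] (a : κ → ℕ) :
    ∃ N : ℕ, ∀ {V : Type*} (c : V → V → κ), (∀ x y, c x y = c y x) →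
      ∀ S : Finset V, N ≤ #S →
        ∃ i, ∃ K ⊆ S, a i ≤ #K ∧ (K : Set V).Pairwise fun x y => c x y = i := by
  classical
  have := Fintype.ofFinite κ
  induction a using WellFoundedLT.induction with
  | ind a ih =>
  by_cases hzero : ∃ i, a i = 0
  · obtain ⟨i, hi⟩ := hzero
    exact ⟨0, fun c _ S _ => ⟨i, ∅, by simp, by simp [hi], by simp⟩⟩
  push Not at hzero
  have hlt (i : κ) : Function.update a i (a i - 1) < a :=
    update_lt_self_iff.mpr (Nat.sub_one_lt (hzero i))
  choose N hN using fun i => ih _ (hlt i)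
  refine ⟨∑ i, N i + 1, fun {V} c hc S hS => ?_⟩
  obtain ⟨v, hv⟩ : S.Nonempty := card_pos.mp (by lia)
  have : Nonempty κ := ⟨c v v⟩
  obtain ⟨i, hi⟩ := exists_le_card_fiber_of_sum_le (S := S.erase v) (N := N) (c v) <| by
    rw [card_erase_of_mem hv]
    lia
  obtain ⟨j, K, hKsub, hKcard, hK⟩ := hN i c hc _ hi
  have hKmem : ∀ x ∈ K, (x ≠ v ∧ x ∈ S) ∧ c v x = i := fun x hx => by
    simpa only [mem_filter, mem_erase] using hKsub hx
  have hKS : K ⊆ S := fun x hx => (hKmem x hx).1.2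
  obtain rfl | hji := eq_or_ne j i
  · have hvK : v ∉ K := fun h => (hKmem v h).1.1 rfl
    refine ⟨j, insert v K, insert_subset hv hKS, ?_, ?_⟩
    · rw [card_insert_of_notMem hvK]
      rw [Function.update_self] at hKcard
      lia
    · rw [coe_insert]
      exact hK.insert fun x hx _ => ⟨(hKmem x hx).2, hc x v ▸ (hKmem x hx).2⟩
  · exact ⟨j, K, hKS, by rwa [Function.update_of_ne hji] at hKcard, hK⟩

section Coloring

variable {α V W : Type*} {k : ℕ} {H : SimpleGraph α} {G : SimpleGraph V} {G' : SimpleGraph W}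

theorem NoRainbowTriangle.comap {c : W → W → Fin k} (h : NoRainbowTriangle G' c) (φ : G →g G') :
    NoRainbowTriangle G fun x y => c (φ x) (φ y) := by
  rintro ⟨x, y, z, hxy, hyz, hxz, hne⟩
  exact h ⟨φ x, φ y, φ z, φ.map_adj hxy, φ.map_adj hyz, φ.map_adj hxz, hne⟩

theorem IsMonoCopy.of_comap {c : W → W → Fin k} (φ : Copy G G')
    (h : IsMonoCopy G (fun x y => c (φ x) (φ y)) H) : IsMonoCopy G' c H := by
  obtain ⟨f, i, hf, hmono⟩ := h
  exact ⟨φ ∘ f, i, φ.injective.comp hf, fun a b hab =>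
    ⟨φ.toHom.map_adj (hmono a b hab).1, (hmono a b hab).2⟩⟩

theorem IsMonoCopy.of_pairwise [Finite α] {c : V → V → Fin k} {i : Fin k} {K : Finset V}
    (hcard : Nat.card α ≤ K.card) (hK : (K : Set V).Pairwise fun x y => c x y = i) :
    IsMonoCopy ⊤ c H := by
  have := Fintype.ofFinite α
  obtain ⟨f⟩ : Nonempty (α ↪ K) :=
    Function.Embedding.nonempty_of_card_le (by simpa [Nat.card_eq_fintype_card] using hcard)
  have hf : Function.Injective fun a => (f a : V) := Subtype.val_injective.comp f.injective
  exact ⟨fun a => f a, i, hf, fun a b hab =>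
    ⟨hf.ne hab.ne, hK (f a).2 (f b).2 (hf.ne hab.ne)⟩⟩

/-- `c` is a Gallai coloring of the complete graph on `V` without a monochromatic copy of `H`,
that is, a witness that `GR_k(H)` exceeds the number of vertices. -/
structure IsGallaiAvoiding (c : V → V → Fin k) (H : SimpleGraph α) : Prop where
  symm : ∀ x y, c x y = c y x
  noRainbowTriangle : NoRainbowTriangle ⊤ c
  not_isMonoCopy : ¬ IsMonoCopy ⊤ c H

theorem IsGallaiAvoiding.comap {c : W → W → Fin k} (hc : IsGallaiAvoiding c H) (f : V ↪ W) :
    IsGallaiAvoiding (fun x y => c (f x) (f y)) H where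
  symm _ _ := hc.symm _ _
  noRainbowTriangle := hc.noRainbowTriangle.comap (Embedding.completeGraph f).toHom
  not_isMonoCopy h := hc.not_isMonoCopy (h.of_comap (Embedding.completeGraph f).toCopy)

theorem IsGallaiAvoiding.lt_gallaiRamsey [Finite α] {N : ℕ} {c : Fin N → Fin N → Fin k}
    (hc : IsGallaiAvoiding c H) : N < GallaiRamsey k H := by
  rw [← Nat.succ_le_iff, GallaiRamsey]
  refine le_csInf ?_ fun M hM => ?_
  · obtain ⟨M, hM⟩ := exists_ramsey_bound fun _ : Fin k => Nat.card α
    refine ⟨M, fun c hsymm _ => ?_⟩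
    obtain ⟨i, K, -, hcard, hK⟩ := hM c hsymm Finset.univ (by simp)
    exact .of_pairwise hcard hK
  · by_contra! hlt
    have hc' := hc.comap (Fin.castLEEmb (Nat.lt_succ_iff.mp hlt))
    exact hc'.not_isMonoCopy (hM _ hc'.symm hc'.noRainbowTriangle)

end Coloring

/-- The 2-coloring of `K₅` whose colors `0` and `1` form a pentagon and its complement, extended to
the diagonal by the color `2`, so that its blow-up colors the edges inside a block by `2`. -/
def pentagonColoring (x y : Fin 5) : Fin 3 :=
  if x = y then 2 else if (cycleGraph 5).Adj x y then 0 else 1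

namespace pentagonColoring

theorem symm : ∀ x y, pentagonColoring x y = pentagonColoring y x := by decide

theorem not_rainbow : ∀ x y z, ¬ (pentagonColoring x y ≠ pentagonColoring y z ∧
    pentagonColoring y z ≠ pentagonColoring x z ∧
    pentagonColoring x y ≠ pentagonColoring x z) := by
  decide

theorem eq_of_eq_two : ∀ {x y}, pentagonColoring x y = 2 → x = y := by decide

theorem exists_map_adj {i : Fin 3} (hi : i ≠ 2) :
    ∃ φ : Fin 5 → Fin 5, ∀ x y, pentagonColoring x y = i → (cycleGraph 5).Adj (φ x) (φ y) := by
  obtain rfl | rfl : i = 0 ∨ i = 1 := by lia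
  · exact ⟨id, by decide⟩
  · -- doubling modulo 5 maps the complementary pentagon onto the pentagon
    exact ⟨fun x => 2 * x, by decide⟩

end pentagonColoring

theorem eq_of_preconnected_of_forall_adj {V β : Type*} {G : SimpleGraph V} (hG : G.Preconnected)
    {f : V → β} (hf : ∀ u v, G.Adj u v → f u = f v) (u v : V) : f u = f v := by
  obtain ⟨p⟩ := hG u v
  induction p with
  | nil => rfl
  | cons h _ ih => exact (hf _ _ h).trans ih

theorem isGallaiAvoiding_pentagonBlowup {α W : Type*} {H : SimpleGraph α} (hH : H.Preconnected)
    (hpent : IsEmpty (H →g cycleGraph 5)) (hW : IsEmpty (α ↪ W)) :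
    IsGallaiAvoiding (fun x y : Fin 5 × W => pentagonColoring x.1 y.1) H where
  symm _ _ := pentagonColoring.symm _ _
  noRainbowTriangle := fun ⟨_, _, _, _, _, _, h⟩ => pentagonColoring.not_rainbow _ _ _ h
  not_isMonoCopy := by
    rintro ⟨f, i, hf, hmono⟩
    obtain rfl | hi := eq_or_ne i 2
    · have hblock : ∀ a b, (f a).1 = (f b).1 := eq_of_preconnected_of_forall_adj hH
        fun a b hab => pentagonColoring.eq_of_eq_two (hmono a b hab).2
      exact hW.false ⟨fun a => (f a).2, fun a b hab => hf (Prod.ext (hblock a b) hab)⟩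
    · obtain ⟨φ, hφ⟩ := pentagonColoring.exists_map_adj hi
      exact hpent.false ⟨fun a => φ (f a).1, fun hab => hφ _ _ (hmono _ _ hab).2⟩

theorem wheelG_preconnected (m : ℕ) : (wheelG m).Preconnected := by
  have hcenter : (wheelG m).IsUniversal 0 := fun b hb => by
    simp [wheelG, hb]
  exact (Connected.of_isUniversal hcenter).preconnected

theorem isEmpty_hom_cycleGraph_five_of_triangle {α : Type*} {H : SimpleGraph α} {a b c : α}
    (hab : H.Adj a b) (hbc : H.Adj b c) (hac : H.Adj a c) : IsEmpty (H →g cycleGraph 5) := by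
  have hfree : ∀ x y z, (cycleGraph 5).Adj x y → (cycleGraph 5).Adj y z →
      ¬ (cycleGraph 5).Adj x z := by
    decide
  exact ⟨fun φ => hfree _ _ _ (φ.map_adj hab) (φ.map_adj hbc) (φ.map_adj hac)⟩

theorem isEmpty_wheelG_hom_cycleGraph_five {m : ℕ} (hm : 2 ≤ m) :
    IsEmpty (wheelG m →g cycleGraph 5) := by
  apply isEmpty_hom_cycleGraph_five_of_triangle (a := 0) (b := ⟨1, by lia⟩) (c := ⟨2, by lia⟩) <;>
    simp [wheelG, Fin.ext_iff, -Fin.val_eq_zero_iff]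

theorem wheel_gallai3_lower_5m_general {α : Type*} [Finite α] {H : SimpleGraph α} {m : ℕ}
    (hH : H.Preconnected) (hpent : IsEmpty (H →g cycleGraph 5)) (hm : m < Nat.card α) :
    (∃ c : Fin (5 * m) → Fin (5 * m) → Fin 3, (∀ x y, c x y = c y x) ∧
      NoRainbowTriangle (⊤ : SimpleGraph (Fin (5 * m))) c ∧
      ¬ IsMonoCopy (⊤ : SimpleGraph (Fin (5 * m))) c H) ∧
    5 * m + 1 ≤ GallaiRamsey 3 H := by
  have hblock : IsEmpty (α ↪ Fin m) :=
    ⟨fun f => hm.not_ge (by simpa using Nat.card_le_card_of_injective f f.injective)⟩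
  have hc := (isGallaiAvoiding_pentagonBlowup hH hpent hblock).comap
    finProdFinEquiv.symm.toEmbedding
  exact ⟨⟨_, hc.symm, hc.noRainbowTriangle, hc.not_isMonoCopy⟩, hc.lt_gallaiRamsey⟩

/-- For every even `m ≥ 6` there is a Gallai 3-coloring of `K_{5m}` with no
monochromatic wheel `W_m`; consequently `GR_3(W_m) ≥ 5m + 1`. -/
theorem wheel_gallai3_lower_5m (m : ℕ) (hm : 6 ≤ m) (hme : m % 2 = 0) :
    (∃ c : Fin (5 * m) → Fin (5 * m) → Fin 3, (∀ x y, c x y = c y x) ∧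
      NoRainbowTriangle (⊤ : SimpleGraph (Fin (5 * m))) c ∧
      ¬ IsMonoCopy (⊤ : SimpleGraph (Fin (5 * m))) c (wheelG m)) ∧
    5 * m + 1 ≤ GallaiRamsey 3 (wheelG m) :=
  wheel_gallai3_lower_5m_general (wheelG_preconnected m)
    (isEmpty_wheelG_hom_cycleGraph_five (by lia)) (by simp)
end
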